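/- In the two-nested-model setting with known variance, the correction term Δ(ρζ/√(1−ρ²), K) − Δ(0, K) is strictly negative whenever ρζ ≠ 0 (and K > 0, |ρ| < 1), and zero when ρζ = 0; hence the coverage probability of the interval β̂_{1·M̂} ± Kσ_{1·M̂} for the true-parameter target β_{1·M₂} is strictly smaller than its coverage probability for the selected-model target β_{1·M̂} whenever ρζ ≠ 0, and equal otherwise. -/

import Mathlib

open MeasureTheory ProbabilityTheory Matrix
open scoped ENNReal NNReal Classical

/-- The Gaussian linear model measure: the law of `y = μ + u`, `u ~ N(0, σ²Iₙ)`. -/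
noncomputable def gaussianLinearModel {n : ℕ} (μ : Fin n → ℝ) (σ : ℝ) :
    Measure (Fin n → ℝ) :=
  Measure.pi fun i => gaussianReal (μ i) (Real.toNNReal (σ ^ 2))

/-- Standard normal cumulative distribution function `Φ`. -/
noncomputable def Phi (x : ℝ) : ℝ := ((gaussianReal 0 1) (Set.Iic x)).toReal

/-- `Δ(x, c) = Φ(x + c) − Φ(x − c)`. -/
noncomputable def Dlt (x c : ℝ) : ℝ := Phi (x + c) - Phi (x - c)

namespace TwoNested

variable {n : ℕ}

/-- `(X'X)⁻¹` for the full model `M₂ = {1, 2}`. -/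
noncomputable def Ai (X : Matrix (Fin n) (Fin 2) ℝ) : Matrix (Fin 2) (Fin 2) ℝ :=
  (Xᵀ * X)⁻¹

/-- Least-squares estimator in the full model `M₂`. -/
noncomputable def bhat2 (X : Matrix (Fin n) (Fin 2) ℝ) (y : Fin n → ℝ) : Fin 2 → ℝ :=
  (Ai X * Xᵀ) *ᵥ y

/-- Least-squares estimator in the restricted model `M₁ = {1}`. -/
noncomputable def bhat1 (X : Matrix (Fin n) (Fin 2) ℝ) (y : Fin n → ℝ) : ℝ :=
  (∑ i, X i 0 * y i) / (∑ i, X i 0 ^ 2)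

/-- `σ_{1·M₂} = σ √([(X'X)⁻¹]₁₁)`. -/
noncomputable def sd1M2 (X : Matrix (Fin n) (Fin 2) ℝ) (σ : ℝ) : ℝ :=
  σ * Real.sqrt (Ai X 0 0)

/-- `σ_{2·M₂} = σ √([(X'X)⁻¹]₂₂)`, the standard deviation of `β̂_{2·M₂}`. -/
noncomputable def sd2M2 (X : Matrix (Fin n) (Fin 2) ℝ) (σ : ℝ) : ℝ :=
  σ * Real.sqrt (Ai X 1 1)

/-- `σ_{1·M₁} = σ √((X₁'X₁)⁻¹)`. -/
noncomputable def sd1M1 (X : Matrix (Fin n) (Fin 2) ℝ) (σ : ℝ) : ℝ :=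
  σ * Real.sqrt (∑ i, X i 0 ^ 2)⁻¹

/-- The correlation `ρ` between the two components of `β̂_{M₂}`. -/
noncomputable def rho (X : Matrix (Fin n) (Fin 2) ℝ) : ℝ :=
  -(Ai X 0 1) / Real.sqrt (Ai X 0 0 * Ai X 1 1)

/-- `ζ = β_{2·M₂} / SD(β̂_{2·M₂})`. -/
noncomputable def zeta (X : Matrix (Fin n) (Fin 2) ℝ) (μ : Fin n → ℝ) (σ : ℝ) : ℝ :=
  bhat2 X μ 1 / sd2M2 X σ

/-- The coverage event for the selected-model target `β_{1·M̂}`, where `M̂ = M₂` iff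
`|β̂_{2·M₂}|/σ_{2·M₂} > C`, with interval `β̂_{1·M̂} ± K σ_{1·M̂}`. -/
def covSelEvent (X : Matrix (Fin n) (Fin 2) ℝ) (μ : Fin n → ℝ) (σ C K : ℝ) :
    Set (Fin n → ℝ) :=
  {y | if |bhat2 X y 1| / sd2M2 X σ > C
    then |bhat2 X y 0 - bhat2 X μ 0| ≤ K * sd1M2 X σ
    else |bhat1 X y - bhat1 X μ| ≤ K * sd1M1 X σ}

/-- The coverage event for the full-model target `β_{1·M₂}`, with the same selector
and the same interval `β̂_{1·M̂} ± K σ_{1·M̂}`. -/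
def covFullEvent (X : Matrix (Fin n) (Fin 2) ℝ) (μ : Fin n → ℝ) (σ C K : ℝ) :
    Set (Fin n → ℝ) :=
  {y | if |bhat2 X y 1| / sd2M2 X σ > C
    then |bhat2 X y 0 - bhat2 X μ 0| ≤ K * sd1M2 X σ
    else |bhat1 X y - bhat2 X μ 0| ≤ K * sd1M1 X σ}

end TwoNested

open TwoNested

/-!
`β̂_{1·M₁}` is a multiple of `X₁'y`, and the weights of `β̂_{2·M₂}` are orthogonal to `X₁`, so in
the Gaussian model `β̂_{1·M₁}` is independent of the selector. The two coverage events differ only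
where `M₁` is selected; hence their probabilities differ by `P(M̂ = M₁) = Δ(ζ, C) > 0` times the
difference between the coverage probabilities of `β̂_{1·M₁} ± Kσ_{1·M₁}` for the two targets.
This interval is centred, on average, at its own target and misses `β_{1·M₂}` by the
omitted-variable bias, which is `ρζ/√(1−ρ²)` in units of `σ_{1·M₁}`; the second factor is therefore
`Δ(ρζ/√(1−ρ²), K) − Δ(0, K)`. Its sign is the unimodality of `x ↦ Δ(x, K)`, whose derivative is
`φ(x + K) − φ(x − K)`, with `φ` the standard normal density.
-/

section Gaussian

lemma gaussianPDFReal_lt_gaussianPDFReal (m : ℝ) {v : ℝ≥0} (hv : v ≠ 0) {x y : ℝ}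
    (hxy : |x - m| < |y - m|) : gaussianPDFReal m v y < gaussianPDFReal m v x := by
  have hsq : (x - m) ^ 2 < (y - m) ^ 2 := sq_lt_sq.2 hxy
  simp only [gaussianPDFReal]
  gcongr

lemma continuous_gaussianPDFReal (m : ℝ) (v : ℝ≥0) : Continuous (gaussianPDFReal m v) := by
  unfold gaussianPDFReal
  fun_prop

lemma Phi_eq_integral (x : ℝ) : Phi x = ∫ t in Set.Iic x, gaussianPDFReal 0 1 t := by
  rw [Phi, gaussianReal_apply_eq_integral _ one_ne_zero, ENNReal.toReal_ofReal]
  exact integral_nonneg fun t => gaussianPDFReal_nonneg 0 1 t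

lemma hasDerivAt_Phi (x : ℝ) : HasDerivAt Phi (gaussianPDFReal 0 1 x) x := by
  have hint (a : ℝ) : IntegrableOn (gaussianPDFReal 0 1) (Set.Iic a) :=
    (integrable_gaussianPDFReal 0 1).integrableOn
  have hPhi : Phi = fun u => Phi 0 + ∫ t in (0 : ℝ)..u, gaussianPDFReal 0 1 t := by
    ext u
    rw [← intervalIntegral.integral_Iic_sub_Iic (hint 0) (hint u), ← Phi_eq_integral,
      ← Phi_eq_integral, add_sub_cancel]
  rw [hPhi]
  exact ((continuous_gaussianPDFReal 0 1).integral_hasStrictDerivAt 0 x).hasDerivAt.const_add _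

lemma strictMono_Phi : StrictMono Phi :=
  strictMono_of_hasDerivAt_pos hasDerivAt_Phi fun x => gaussianPDFReal_pos 0 1 x one_ne_zero

instance : NullSingletonClass (gaussianReal 0 1) := nullSingletonClass_gaussianReal one_ne_zero

lemma measureReal_Icc_eq_Phi_sub_Phi {a b : ℝ} (hab : a ≤ b) :
    (gaussianReal 0 1).real (Set.Icc a b) = Phi b - Phi a := by
  rw [measureReal_congr Ioc_ae_eq_Icc.symm, ← Set.Iic_sdiff_Iic,
    measureReal_sdiff (Set.Iic_subset_Iic.2 hab) measurableSet_Iic]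
  rfl

lemma Phi_neg (x : ℝ) : Phi (-x) = 1 - Phi x := by
  calc Phi (-x) = ((gaussianReal 0 1).map fun t => -t).real (Set.Iic (-x)) := by
        rw [gaussianReal_map_neg, neg_zero]; rfl
    _ = (gaussianReal 0 1).real (Set.Ici x) := by
        rw [map_measureReal_apply measurable_neg measurableSet_Iic]; simp
    _ = (gaussianReal 0 1).real (Set.Iic x)ᶜ := by
        rw [Set.compl_Iic, measureReal_congr Ioi_ae_eq_Ici]
    _ = 1 - Phi x := probReal_compl_eq_one_sub measurableSet_Iic

lemma Dlt_neg (x c : ℝ) : Dlt (-x) c = Dlt x c := by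
  have hleft : -x - c = -(x + c) := by ring
  have hright : -x + c = -(x - c) := by ring
  rw [Dlt, Dlt, hleft, hright, Phi_neg, Phi_neg]
  ring

lemma Dlt_pos (x : ℝ) {c : ℝ} (hc : 0 < c) : 0 < Dlt x c :=
  sub_pos.2 (strictMono_Phi (by linarith))

lemma hasDerivAt_Dlt (x c : ℝ) :
    HasDerivAt (Dlt · c) (gaussianPDFReal 0 1 (x + c) - gaussianPDFReal 0 1 (x - c)) x :=
  ((hasDerivAt_Phi (x + c)).comp_add_const x c).sub ((hasDerivAt_Phi (x - c)).comp_sub_const x c)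

lemma strictAntiOn_Dlt {c : ℝ} (hc : 0 < c) : StrictAntiOn (Dlt · c) (Set.Ici 0) := by
  refine strictAntiOn_of_hasDerivWithinAt_neg (convex_Ici 0)
    (fun x _ => (hasDerivAt_Dlt x c).continuousAt.continuousWithinAt)
    (fun x _ => (hasDerivAt_Dlt x c).hasDerivWithinAt) fun x hx => ?_
  have hx : 0 < x := by simpa using hx
  refine sub_neg.2 (gaussianPDFReal_lt_gaussianPDFReal 0 one_ne_zero ?_)
  rw [sub_zero, sub_zero, abs_of_pos (by linarith : 0 < x + c), abs_lt]
  constructor <;> linarith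

lemma Dlt_abs (x c : ℝ) : Dlt |x| c = Dlt x c := by
  rcases abs_choice x with h | h <;> simp only [h, Dlt_neg]

lemma Dlt_lt_Dlt_zero {x c : ℝ} (hx : x ≠ 0) (hc : 0 < c) : Dlt x c < Dlt 0 c := by
  rw [← Dlt_abs x]
  exact strictAntiOn_Dlt hc Set.self_mem_Ici (abs_nonneg x) (abs_pos.2 hx)

variable {Ω : Type*} [MeasurableSpace Ω] {P : Measure Ω} {U : Ω → ℝ} {m s : ℝ}

lemma hasLaw_standardize (hU : HasLaw U (gaussianReal m (s ^ 2).toNNReal) P) (hs : s ≠ 0) :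
    HasLaw (fun ω => (U ω - m) / s) (gaussianReal 0 1) P := by
  have hvar : (s ^ 2).toNNReal / .mk (s ^ 2) (sq_nonneg s) = 1 := by
    ext
    simp [sq_nonneg, hs]
  simpa [hvar] using gaussianReal_div_const (gaussianReal_sub_const hU m) s

lemma measureReal_abs_sub_le_mul (hU : HasLaw U (gaussianReal m (s ^ 2).toNNReal) P)
    (hs : 0 < s) (t : ℝ) {c : ℝ} (hc : 0 ≤ c) :
    P.real {ω | |U ω - t| ≤ c * s} = Dlt ((t - m) / s) c := by
  have hstd (ω : Ω) : |U ω - t| ≤ c * s ↔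
      (U ω - m) / s ∈ Set.Icc ((t - m) / s - c) ((t - m) / s + c) := by
    rw [← Set.mem_Icc_iff_abs_le, div_sub_div_same, sub_sub_sub_cancel_right, abs_div,
      abs_of_pos hs, div_le_iff₀ hs, abs_sub_comm]
  simp only [hstd]
  rw [(hasLaw_standardize hU hs.ne').measureReal_eq (p := (· ∈ Set.Icc _ _)) measurableSet_Icc]
  exact measureReal_Icc_eq_Phi_sub_Phi (by linarith)

end Gaussian

section Independence

variable {Ω 𝓤 𝓥 : Type*} [MeasurableSpace Ω] [MeasurableSpace 𝓤] [MeasurableSpace 𝓥]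
  {P : Measure Ω} [IsFiniteMeasure P] {U : Ω → 𝓤} {V : Ω → 𝓥}

lemma measureReal_ite_of_indepFun (hUV : IndepFun U V P) (hV : Measurable V) (A : Set Ω)
    {B : Set 𝓤} (hB : MeasurableSet B) {S : Set 𝓥} [DecidablePred (· ∈ S)]
    (hS : MeasurableSet S) :
    P.real {ω | if V ω ∈ S then ω ∈ A else U ω ∈ B} =
      P.real (A ∩ V ⁻¹' S) + P.real (U ⁻¹' B) * P.real (V ⁻¹' Sᶜ) := by
  set E := {ω | if V ω ∈ S then ω ∈ A else U ω ∈ B} with hE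
  have hE_inter : E ∩ V ⁻¹' S = A ∩ V ⁻¹' S := by
    ext ω
    by_cases h : V ω ∈ S <;> simp [hE, h]
  have hE_sdiff : E \ V ⁻¹' S = U ⁻¹' B ∩ V ⁻¹' Sᶜ := by
    ext ω
    by_cases h : V ω ∈ S <;> simp [hE, h]
  rw [← measureReal_inter_add_sdiff (hV hS), hE_inter, hE_sdiff]
  simp only [Measure.real]
  rw [hUV.measure_inter_preimage_eq_mul _ _ hB hS.compl, ENNReal.toReal_mul]

lemma measureReal_ite_sub_measureReal_ite_of_indepFun (hUV : IndepFun U V P) (hV : Measurable V)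
    (A : Set Ω) {B B' : Set 𝓤} (hB : MeasurableSet B) (hB' : MeasurableSet B') {S : Set 𝓥}
    [DecidablePred (· ∈ S)] (hS : MeasurableSet S) :
    P.real {ω | if V ω ∈ S then ω ∈ A else U ω ∈ B} -
        P.real {ω | if V ω ∈ S then ω ∈ A else U ω ∈ B'} =
      (P.real (U ⁻¹' B) - P.real (U ⁻¹' B')) * P.real (V ⁻¹' Sᶜ) := by
  rw [measureReal_ite_of_indepFun hUV hV A hB hS, measureReal_ite_of_indepFun hUV hV A hB' hS]
  ring

end Independence

section GaussianLinearModel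

variable {n : ℕ} (μ : Fin n → ℝ) (σ : ℝ)

instance : IsProbabilityMeasure (gaussianLinearModel μ σ) := by
  unfold gaussianLinearModel
  infer_instance

lemma hasLaw_eval_gaussianLinearModel (i : Fin n) :
    HasLaw (fun y : Fin n → ℝ => y i) (gaussianReal (μ i) (σ ^ 2).toNNReal)
      (gaussianLinearModel μ σ) :=
  (measurePreserving_eval (fun i => gaussianReal (μ i) (σ ^ 2).toNNReal) i).hasLaw

lemma iIndepFun_eval_gaussianLinearModel :
    iIndepFun (fun (i : Fin n) (y : Fin n → ℝ) => y i) (gaussianLinearModel μ σ) :=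
  iIndepFun_pi (X := fun _ => id) fun _ => aemeasurable_id

lemma memLp_two_eval_gaussianLinearModel (i : Fin n) :
    MemLp (fun y : Fin n → ℝ => y i) 2 (gaussianLinearModel μ σ) :=
  (hasLaw_eval_gaussianLinearModel μ σ i).hasGaussianLaw.memLp_two

lemma covariance_eval_eval_gaussianLinearModel (i j : Fin n) :
    cov[fun y => y i, fun y => y j; gaussianLinearModel μ σ] = if i = j then σ ^ 2 else 0 := by
  split_ifs with hij
  · subst hij
    rw [covariance_self (measurable_pi_apply i).aemeasurable,
      (hasLaw_eval_gaussianLinearModel μ σ i).variance_eq, variance_id_gaussianReal,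
      Real.coe_toNNReal _ (sq_nonneg σ)]
  · exact ((iIndepFun_eval_gaussianLinearModel μ σ).indepFun hij).covariance_eq_zero
      (memLp_two_eval_gaussianLinearModel μ σ i) (memLp_two_eval_gaussianLinearModel μ σ j)

lemma integral_dotProduct_gaussianLinearModel (a : Fin n → ℝ) :
    ∫ y, a ⬝ᵥ y ∂gaussianLinearModel μ σ = a ⬝ᵥ μ := by
  simp only [dotProduct]
  rw [integral_finsetSum _ fun i _ =>
    ((memLp_two_eval_gaussianLinearModel μ σ i).integrable one_le_two).const_mul _]
  refine Finset.sum_congr rfl fun i _ => ?_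
  rw [integral_const_mul, (hasLaw_eval_gaussianLinearModel μ σ i).integral_eq,
    integral_id_gaussianReal]

lemma covariance_dotProduct_gaussianLinearModel (a b : Fin n → ℝ) :
    cov[fun y => a ⬝ᵥ y, fun y => b ⬝ᵥ y; gaussianLinearModel μ σ] = σ ^ 2 * (a ⬝ᵥ b) := by
  have hLp (c : Fin n → ℝ) (i : Fin n) :
      MemLp (fun y : Fin n → ℝ => c i * y i) 2 (gaussianLinearModel μ σ) :=
    (memLp_two_eval_gaussianLinearModel μ σ i).const_mul _
  simp only [dotProduct]
  rw [covariance_fun_sum_fun_sum (hLp a) (hLp b), Finset.mul_sum]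
  refine Finset.sum_congr rfl fun i _ => ?_
  simp only [covariance_const_mul_left, covariance_const_mul_right,
    covariance_eval_eval_gaussianLinearModel, mul_ite, mul_zero, Finset.sum_ite_eq,
    Finset.mem_univ, if_true]
  ring

lemma hasGaussianLaw_dotProduct_prod_gaussianLinearModel (a b : Fin n → ℝ) :
    HasGaussianLaw (fun y => (a ⬝ᵥ y, b ⬝ᵥ y)) (gaussianLinearModel μ σ) := by
  have hid : HasGaussianLaw (fun y : Fin n → ℝ => y) (gaussianLinearModel μ σ) :=
    (iIndepFun_eval_gaussianLinearModel μ σ).hasGaussianLaw fun i =>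
      (hasLaw_eval_gaussianLinearModel μ σ i).hasGaussianLaw
  exact hid.map_fun ((dotProductBilin ℝ ℝ a).prod (dotProductBilin ℝ ℝ b)).toContinuousLinearMap

lemma hasLaw_dotProduct_gaussianLinearModel (a : Fin n → ℝ) :
    HasLaw (fun y => a ⬝ᵥ y) (gaussianReal (a ⬝ᵥ μ) (σ ^ 2 * (a ⬝ᵥ a)).toNNReal)
      (gaussianLinearModel μ σ) := by
  have hgauss := (hasGaussianLaw_dotProduct_prod_gaussianLinearModel μ σ a a).fst
  refine ⟨hgauss.aemeasurable, ?_⟩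
  rw [hgauss.map_eq_gaussianReal, integral_dotProduct_gaussianLinearModel,
    ← covariance_dotProduct_gaussianLinearModel μ, covariance_self hgauss.aemeasurable]

lemma indepFun_dotProduct_gaussianLinearModel {a b : Fin n → ℝ} (hab : a ⬝ᵥ b = 0) :
    IndepFun (fun y => a ⬝ᵥ y) (fun y => b ⬝ᵥ y) (gaussianLinearModel μ σ) :=
  (hasGaussianLaw_dotProduct_prod_gaussianLinearModel μ σ a b).indepFun_of_covariance_eq_zero <| by
    rw [covariance_dotProduct_gaussianLinearModel, hab, mul_zero]

end GaussianLinearModel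

lemma posDef_transpose_mul_self {m k : Type*} [Fintype m] [Fintype k] (A : Matrix m k ℝ)
    (hA : A.rank = Fintype.card k) : (Aᵀ * A).PosDef := by
  have hcols : LinearIndependent ℝ A.col :=
    linearIndependent_iff_card_eq_finrank_span.2 (by rw [← hA, rank_eq_finrank_span_cols]; rfl)
  simpa using PosDef.conjTranspose_mul_self A (mulVec_injective_iff.2 hcols)

namespace TwoNested

section LeastSquares

variable {n : ℕ} {X : Matrix (Fin n) (Fin 2) ℝ}

lemma gram_zero_zero : (Xᵀ * X) 0 0 = ∑ i, X i 0 ^ 2 := by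
  simp [mul_apply, sq]

lemma gram_one_zero : (Xᵀ * X) 1 0 = (Xᵀ * X) 0 1 := by
  simp [mul_apply, mul_comm]

variable (hX : X.rank = 2)
include hX

lemma posDef_gram : (Xᵀ * X).PosDef :=
  posDef_transpose_mul_self X (by simpa using hX)

lemma posDef_Ai : (Ai X).PosDef :=
  (posDef_gram hX).inv

lemma Ai_mul_gram : Ai X * (Xᵀ * X) = 1 :=
  nonsing_inv_mul _ (posDef_gram hX).det_pos.ne'.isUnit

lemma gram_mul_Ai : Xᵀ * X * Ai X = 1 :=
  mul_nonsing_inv _ (posDef_gram hX).det_pos.ne'.isUnit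

lemma Ai_one_zero : Ai X 1 0 = Ai X 0 1 := by
  simpa using (posDef_Ai hX).isHermitian.apply 0 1

lemma Ai_one_mul_gram : Ai X 0 1 * (Xᵀ * X) 0 0 + Ai X 1 1 * (Xᵀ * X) 1 0 = 0 := by
  simpa [mul_apply (M := Ai X), Ai_one_zero hX] using congr_fun₂ (Ai_mul_gram hX) 1 0

lemma sum_sq_pos : 0 < ∑ i, X i 0 ^ 2 :=
  gram_zero_zero (X := X) ▸ (posDef_gram hX).diag_pos

lemma gram_mulVec_bhat2 (y : Fin n → ℝ) : (Xᵀ * X) *ᵥ bhat2 X y = Xᵀ *ᵥ y := by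
  rw [bhat2, mulVec_mulVec, ← Matrix.mul_assoc, gram_mul_Ai hX, Matrix.one_mul]

lemma bhat1_sub_bhat2 (y : Fin n → ℝ) :
    bhat1 X y - bhat2 X y 0 = -(Ai X 0 1 / Ai X 1 1) * bhat2 X y 1 := by
  have h11 : Ai X 1 1 ≠ 0 := (posDef_Ai hX).diag_pos.ne'
  have hsum : ∑ i, X i 0 ^ 2 ≠ 0 := (sum_sq_pos hX).ne'
  have hnormal : (∑ i, X i 0 ^ 2) * bhat2 X y 0 + (Xᵀ * X) 1 0 * bhat2 X y 1 =
      ∑ i, X i 0 * y i := by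
    simpa [mulVec, dotProduct, gram_zero_zero, ← gram_one_zero] using
      congr_fun (gram_mulVec_bhat2 hX y) 0
  have hAi := Ai_one_mul_gram hX
  rw [gram_zero_zero] at hAi
  rw [bhat1]
  field_simp
  linear_combination bhat2 X y 1 * hAi - Ai X 1 1 * hnormal

lemma inv_sum_sq_eq : (∑ i, X i 0 ^ 2)⁻¹ = Ai X 0 0 * (1 - rho X ^ 2) := by
  have h00 : 0 < Ai X 0 0 := (posDef_Ai hX).diag_pos
  have h11 : 0 < Ai X 1 1 := (posDef_Ai hX).diag_pos
  have hrho : rho X ^ 2 = Ai X 0 1 ^ 2 / (Ai X 0 0 * Ai X 1 1) := by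
    rw [rho, div_pow, neg_sq, Real.sq_sqrt (by positivity)]
  have hAi : Ai X 0 0 * (Xᵀ * X) 0 0 + Ai X 0 1 * (Xᵀ * X) 1 0 = 1 := by
    simpa [mul_apply (M := Ai X)] using congr_fun₂ (Ai_mul_gram hX) 0 0
  rw [← gram_zero_zero, hrho]
  refine inv_eq_of_mul_eq_one_right ?_
  field_simp
  linear_combination Ai X 1 1 * hAi - Ai X 0 1 * Ai_one_mul_gram hX

lemma sd1M1_eq (σ : ℝ) : sd1M1 X σ = sd1M2 X σ * √(1 - rho X ^ 2) := by
  rw [sd1M1, sd1M2, inv_sum_sq_eq hX, Real.sqrt_mul (posDef_Ai hX).diag_pos.le, mul_assoc]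

lemma rho_mul_sd1M2_div_sd2M2 {σ : ℝ} (hσ : σ ≠ 0) :
    rho X * (sd1M2 X σ / sd2M2 X σ) = -(Ai X 0 1 / Ai X 1 1) := by
  have h00 : 0 < Ai X 0 0 := (posDef_Ai hX).diag_pos
  have h11 : 0 < Ai X 1 1 := (posDef_Ai hX).diag_pos
  rw [rho, sd1M2, sd2M2, mul_div_mul_left _ _ hσ, Real.sqrt_mul h00.le]
  field_simp
  rw [Real.sq_sqrt h11.le]

lemma sd1M1_pos {σ : ℝ} (hσ : 0 < σ) : 0 < sd1M1 X σ :=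
  mul_pos hσ (Real.sqrt_pos.2 (inv_pos.2 (sum_sq_pos hX)))

lemma sd1M2_pos {σ : ℝ} (hσ : 0 < σ) : 0 < sd1M2 X σ :=
  mul_pos hσ (Real.sqrt_pos.2 (posDef_Ai hX).diag_pos)

lemma sd2M2_pos {σ : ℝ} (hσ : 0 < σ) : 0 < sd2M2 X σ :=
  mul_pos hσ (Real.sqrt_pos.2 (posDef_Ai hX).diag_pos)

lemma bhat1_sub_bhat2_div_sd1M1 (μ : Fin n → ℝ) {σ : ℝ} (hσ : 0 < σ) :
    (bhat1 X μ - bhat2 X μ 0) / sd1M1 X σ = rho X * zeta X μ σ / √(1 - rho X ^ 2) := by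
  have hsd : sd1M2 X σ ≠ 0 := (sd1M2_pos hX hσ).ne'
  calc (bhat1 X μ - bhat2 X μ 0) / sd1M1 X σ
      = sd1M2 X σ * (rho X * zeta X μ σ) / (sd1M2 X σ * √(1 - rho X ^ 2)) := by
        rw [bhat1_sub_bhat2 hX, ← rho_mul_sd1M2_div_sd2M2 hX hσ.ne', sd1M1_eq hX, zeta]
        ring
    _ = rho X * zeta X μ σ / √(1 - rho X ^ 2) := mul_div_mul_left _ _ hsd

end LeastSquares

section Sampling

variable {n : ℕ} {X : Matrix (Fin n) (Fin 2) ℝ}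

lemma bhat1_eq_dotProduct (y : Fin n → ℝ) :
    bhat1 X y = ((∑ i, X i 0 ^ 2)⁻¹ • X.col 0) ⬝ᵥ y := by
  rw [bhat1, smul_dotProduct, smul_eq_mul, div_eq_inv_mul]
  rfl

lemma bhat2_one_eq_dotProduct (y : Fin n → ℝ) : bhat2 X y 1 = (Ai X * Xᵀ).row 1 ⬝ᵥ y :=
  rfl

lemma hasLaw_bhat1 (μ : Fin n → ℝ) (σ : ℝ) :
    HasLaw (bhat1 X) (gaussianReal (bhat1 X μ) (sd1M1 X σ ^ 2).toNNReal)
      (gaussianLinearModel μ σ) := by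
  have hcol : X.col 0 ⬝ᵥ X.col 0 = ∑ i, X i 0 ^ 2 := by
    simp [dotProduct, sq]
  have hvar : sd1M1 X σ ^ 2 = σ ^ 2 *
      (((∑ i, X i 0 ^ 2)⁻¹ • X.col 0) ⬝ᵥ ((∑ i, X i 0 ^ 2)⁻¹ • X.col 0)) := by
    have hinv := mul_self_mul_inv (∑ i, X i 0 ^ 2)⁻¹
    rw [inv_inv] at hinv
    rw [sd1M1, mul_pow, Real.sq_sqrt (by positivity), smul_dotProduct, dotProduct_smul, hcol,
      smul_eq_mul, smul_eq_mul, ← mul_assoc (_)⁻¹, hinv]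
  rw [hvar, funext (bhat1_eq_dotProduct (X := X))]
  exact hasLaw_dotProduct_gaussianLinearModel μ σ _

lemma Ai_mul_transpose_mul_transpose (hX : X.rank = 2) :
    Ai X * Xᵀ * (Ai X * Xᵀ)ᵀ = Ai X := by
  have hsymm : (Ai X)ᵀ = Ai X := by simpa using (posDef_Ai hX).isHermitian.eq
  calc Ai X * Xᵀ * (Ai X * Xᵀ)ᵀ = Ai X * (Xᵀ * X) * (Ai X)ᵀ := by
        simp only [transpose_mul, transpose_transpose, Matrix.mul_assoc]
    _ = Ai X := by rw [Ai_mul_gram hX, Matrix.one_mul, hsymm]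

lemma hasLaw_bhat2_one (hX : X.rank = 2) (μ : Fin n → ℝ) (σ : ℝ) :
    HasLaw (bhat2 X · 1) (gaussianReal (bhat2 X μ 1) (sd2M2 X σ ^ 2).toNNReal)
      (gaussianLinearModel μ σ) := by
  have hvar : sd2M2 X σ ^ 2 = σ ^ 2 * ((Ai X * Xᵀ).row 1 ⬝ᵥ (Ai X * Xᵀ).row 1) := by
    rw [sd2M2, mul_pow, Real.sq_sqrt (posDef_Ai hX).diag_pos.le]
    congr 1
    exact (congr_fun₂ (Ai_mul_transpose_mul_transpose hX) 1 1).symm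
  rw [hvar]
  exact hasLaw_dotProduct_gaussianLinearModel μ σ _

lemma indepFun_bhat1_bhat2_one (hX : X.rank = 2) (μ : Fin n → ℝ) (σ : ℝ) :
    IndepFun (bhat1 X) (bhat2 X · 1) (gaussianLinearModel μ σ) := by
  have horth : X.col 0 ⬝ᵥ (Ai X * Xᵀ).row 1 = 0 := by
    calc X.col 0 ⬝ᵥ (Ai X * Xᵀ).row 1 = (Ai X * Xᵀ * X) 1 0 := dotProduct_comm _ _
      _ = 0 := by rw [Matrix.mul_assoc, Ai_mul_gram hX, one_apply_ne one_ne_zero]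
  have hweights : ((∑ i, X i 0 ^ 2)⁻¹ • X.col 0) ⬝ᵥ (Ai X * Xᵀ).row 1 = 0 := by
    rw [smul_dotProduct, horth, smul_zero]
  rw [funext (bhat1_eq_dotProduct (X := X))]
  exact indepFun_dotProduct_gaussianLinearModel μ σ hweights

lemma measureReal_abs_bhat2_one_div_le (hX : X.rank = 2) (μ : Fin n → ℝ) {σ : ℝ} (hσ : 0 < σ)
    {C : ℝ} (hC : 0 ≤ C) :
    (gaussianLinearModel μ σ).real {y | |bhat2 X y 1| / sd2M2 X σ ≤ C} =
      Dlt (zeta X μ σ) C := by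
  have hsd := sd2M2_pos hX hσ
  have hzeta : zeta X μ σ = -((0 - bhat2 X μ 1) / sd2M2 X σ) := by
    rw [zeta]; ring
  rw [hzeta, Dlt_neg, ← measureReal_abs_sub_le_mul (hasLaw_bhat2_one hX μ σ) hsd 0 hC]
  simp only [sub_zero, div_le_iff₀ hsd]

lemma measureReal_abs_bhat1_sub_le (hX : X.rank = 2) (μ : Fin n → ℝ) {σ : ℝ} (hσ : 0 < σ) (t : ℝ)
    {K : ℝ} (hK : 0 ≤ K) :
    (gaussianLinearModel μ σ).real {y | |bhat1 X y - t| ≤ K * sd1M1 X σ} =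
      Dlt ((bhat1 X μ - t) / sd1M1 X σ) K := by
  have hneg : (bhat1 X μ - t) / sd1M1 X σ = -((t - bhat1 X μ) / sd1M1 X σ) := by ring
  rw [hneg, Dlt_neg, measureReal_abs_sub_le_mul (hasLaw_bhat1 μ σ) (sd1M1_pos hX hσ) t hK]

lemma measureReal_covFullEvent_sub_covSelEvent (hX : X.rank = 2) (μ : Fin n → ℝ) {σ : ℝ}
    (hσ : 0 < σ) {C K : ℝ} (hC : 0 ≤ C) (hK : 0 ≤ K) :
    (gaussianLinearModel μ σ).real (covFullEvent X μ σ C K) -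
        (gaussianLinearModel μ σ).real (covSelEvent X μ σ C K) =
      (Dlt (rho X * zeta X μ σ / √(1 - rho X ^ 2)) K - Dlt 0 K) * Dlt (zeta X μ σ) C := by
  have hinterval (t : ℝ) : MeasurableSet {u : ℝ | |u - t| ≤ K * sd1M1 X σ} :=
    measurableSet_le (by fun_prop) measurable_const
  have hselect : MeasurableSet {v : ℝ | |v| / sd2M2 X σ > C} :=
    measurableSet_lt measurable_const (by fun_prop)
  have hcompl : (bhat2 X · 1) ⁻¹' {v : ℝ | |v| / sd2M2 X σ > C}ᶜ =
      {y | |bhat2 X y 1| / sd2M2 X σ ≤ C} := by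
    ext y; simp
  have hmeas : Measurable (bhat2 X · 1) := by
    simp only [bhat2_one_eq_dotProduct, dotProduct]
    fun_prop
  have hsplit := measureReal_ite_sub_measureReal_ite_of_indepFun
    (indepFun_bhat1_bhat2_one hX μ σ) hmeas {y | |bhat2 X y 0 - bhat2 X μ 0| ≤ K * sd1M2 X σ}
    (hinterval (bhat2 X μ 0)) (hinterval (bhat1 X μ)) hselect
  rw [hcompl, measureReal_abs_bhat2_one_div_le hX μ hσ hC] at hsplit
  refine hsplit.trans ?_
  simp only [Set.preimage_ofPred_eq, measureReal_abs_bhat1_sub_le hX μ hσ _ hK, sub_self, zero_div,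
    bhat1_sub_bhat2_div_sd1M1 hX μ hσ]

end Sampling

end TwoNested

/-- in the two-nested-model setting with known variance, the correction term
`Δ(ρζ/√(1−ρ²), K) − Δ(0, K)` is strictly negative whenever `ρζ ≠ 0` (for `K > 0`,
`|ρ| < 1`) and zero when `ρζ = 0`; hence the coverage probability of
`β̂_{1·M̂} ± Kσ_{1·M̂}` for the target `β_{1·M₂}` is strictly smaller than that for the
target `β_{1·M̂}` whenever `ρζ ≠ 0`, and the two are equal otherwise. -/
theorem correction_term_sign {n : ℕ} (X : Matrix (Fin n) (Fin 2) ℝ)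
    (hrank : X.rank = 2) (μ : Fin n → ℝ) (σ : ℝ) (hσ : 0 < σ)
    (C K : ℝ) (hC : 0 < C) (hK : 0 < K) (hρ : |rho X| < 1) :
    (rho X * zeta X μ σ ≠ 0 →
      Dlt (rho X * zeta X μ σ / Real.sqrt (1 - rho X ^ 2)) K - Dlt 0 K < 0 ∧
      (gaussianLinearModel μ σ (covFullEvent X μ σ C K)).toReal <
        (gaussianLinearModel μ σ (covSelEvent X μ σ C K)).toReal)
    ∧ (rho X * zeta X μ σ = 0 →
      Dlt (rho X * zeta X μ σ / Real.sqrt (1 - rho X ^ 2)) K - Dlt 0 K = 0 ∧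
      gaussianLinearModel μ σ (covFullEvent X μ σ C K) =
        gaussianLinearModel μ σ (covSelEvent X μ σ C K)) := by
  have hdiff := measureReal_covFullEvent_sub_covSelEvent hrank μ hσ hC.le hK.le
  have hsqrt : √(1 - rho X ^ 2) ≠ 0 :=
    (Real.sqrt_pos.2 (sub_pos.2 ((sq_lt_one_iff_abs_lt_one _).2 hρ))).ne'
  refine ⟨fun h => ?_, fun h => ?_⟩
  · have hcorr : Dlt (rho X * zeta X μ σ / √(1 - rho X ^ 2)) K - Dlt 0 K < 0 :=
      sub_neg.2 (Dlt_lt_Dlt_zero (div_ne_zero h hsqrt) hK)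
    exact ⟨hcorr, sub_neg.1 (hdiff.trans_lt (mul_neg_of_neg_of_pos hcorr (Dlt_pos _ hC)))⟩
  · have hcorr : Dlt (rho X * zeta X μ σ / √(1 - rho X ^ 2)) K - Dlt 0 K = 0 := by
      rw [h, zero_div, sub_self]
    rw [hcorr, zero_mul, sub_eq_zero] at hdiff
    exact ⟨hcorr, (measureReal_eq_measureReal_iff).1 hdiff⟩
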